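/- Let q > 2, λ > 0, and let f : [0,∞) → ℝ be a twice continuously differentiable solution of the ODE f''(ξ) + λ|f'(ξ)|^q − (1/2)ξ f'(ξ) + ((q−2)/(2(q−1))) f(ξ) = 0 on [0,∞) with f(0) = −1 and f'(0) = 0, and define g(t) = e^{−t/(q−1)} f'(e^t). Then liminf_{t→∞} g(t) ≥ C₀, where C₀ = (1/(λq))^{1/(q−1)}. -/

import Mathlib

open Set Filter Topology Real

/-- `f` is a twice continuously differentiable solution, on the set `s`, of the
self-similar profile ODE `f'' + λ|f'|^q - (1/2)ξ f' + ((q-2)/(2(q-1))) f = 0`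
associated with the generalized deterministic KPZ equation. -/
def SolvesKPZProfile (q lam : ℝ) (s : Set ℝ) (f : ℝ → ℝ) : Prop :=
  ContDiffOn ℝ 2 f s ∧
  ∀ ξ ∈ s,
    derivWithin (derivWithin f s) s ξ + lam * |derivWithin f s ξ| ^ q
      - (1 / 2) * ξ * derivWithin f s ξ + ((q - 2) / (2 * (q - 1))) * f ξ = 0

/-- The function `g(t) = e^{-t/(q-1)} f'(e^t)`, i.e. the profile derivative in the
variables `f'(ξ) = ξ^{1/(q-1)} g(t)`, `ξ = e^t`. -/
noncomputable def kpzG (q : ℝ) (f : ℝ → ℝ) : ℝ → ℝ :=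
  fun t => Real.exp (-t / (q - 1)) * derivWithin f (Set.Ici 0) (Real.exp t)

lemma kpz_mono {F F' : ℝ → ℝ} {x0 T : ℝ} (hT : x0 ≤ T)
    (hd : ∀ x ∈ Icc x0 T, HasDerivAt F (F' x) x) (hn : ∀ x ∈ Icc x0 T, 0 ≤ F' x) :
    F x0 ≤ F T := by
  have : MonotoneOn F (Icc x0 T) := by
    apply monotoneOn_of_deriv_nonneg (convex_Icc _ _)
    · exact fun x hx => (hd x hx).continuousAt.continuousWithinAt
    · intro x hx
      exact (hd x (interior_subset hx)).differentiableAt.differentiableWithinAt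
    · intro x hx
      rw [(hd x (interior_subset hx)).deriv]
      exact hn x (interior_subset hx)
  exact this (left_mem_Icc.2 hT) (right_mem_Icc.2 hT) hT

lemma kpz_G_deriv {h w : ℝ → ℝ} (b : ℝ)
    (hh : ∀ x > 0, HasDerivAt h (w x) x) {x : ℝ} (hx : 0 < x) :
    HasDerivAt (fun x => h x * x ^ (-b)) (x ^ (-b - 1) * (x * w x - b * h x)) x := by
  have h1 := (hh x hx).mul (Real.hasDerivAt_rpow_const (x := x) (p := -b) (Or.inl hx.ne'))
  refine h1.congr_deriv ?_
  have : x ^ (-b) = x ^ (-b - 1) * x := by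
    rw [Real.rpow_sub_one hx.ne']; field_simp
  rw [this]; ring

/-- the decrease estimate -/
lemma kpz_L1 {h w D : ℝ → ℝ} {a : ℝ} (ha : 0 < a) (ha1 : a < 1)
    (hh : ∀ x > 0, HasDerivAt h (w x) x)
    (hw : ∀ x > 0, HasDerivAt w (a / 2 * h x - (D x - x / 2) * w x) x)
    (hpos : ∀ x > 0, 0 < h x) (wpos : ∀ x > 0, 0 < w x)
    {x0 T : ℝ} (hx0 : 0 < x0) (hT : x0 ≤ T)
    (hD : ∀ x ∈ Icc x0 T, D x ≤ x) :
    h x0 * x0 ^ (-a) * (1 - 2 * a / x0 ^ 2) ≤ h T * T ^ (-a) := by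
  have key : ∀ x ∈ Icc x0 T, -(a * h x0) * exp (-(x0 * (x - x0) / 2)) ≤ x * w x - a * h x := by
    intro x hx
    have hm : (x0 * w x0 - a * h x0) * exp (x0 ^ 2 / 4) ≤ (x * w x - a * h x) * exp (x ^ 2 / 4) := by
      refine kpz_mono (F := fun y => (y * w y - a * h y) * exp (y ^ 2 / 4))
        (F' := fun y => (1 * w y + y * (a / 2 * h y - (D y - y / 2) * w y) - a * w y) * exp (y ^ 2 / 4)
          + (y * w y - a * h y) * (exp (y ^ 2 / 4) * (2 * y / 4))) hx.1 ?_ ?_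
      · intro y hy
        have hy0 : 0 < y := hx0.trans_le hy.1
        have e1 : HasDerivAt (fun y : ℝ => exp (y ^ 2 / 4)) (exp (y ^ 2 / 4) * (2 * y / 4)) y := by
          have := ((hasDerivAt_pow 2 y).div_const 4).exp
          simpa using this
        exact (((hasDerivAt_id y).mul (hw y hy0)).sub ((hh y hy0).const_mul a)).mul e1
      · intro y hy
        have hy0 : 0 < y := hx0.trans_le hy.1
        have hDy := hD y ⟨hy.1, hy.2.trans hx.2⟩
        have h1 : 0 ≤ y * w y * (y - D y) :=
          mul_nonneg (mul_nonneg hy0.le (wpos y hy0).le) (by linarith)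
        have h2 : 0 ≤ (1 - a) * w y := mul_nonneg (by linarith) (wpos y hy0).le
        have : (1 * w y + y * (a / 2 * h y - (D y - y / 2) * w y) - a * w y) * exp (y ^ 2 / 4)
          + (y * w y - a * h y) * (exp (y ^ 2 / 4) * (2 * y / 4))
          = ((1 - a) * w y + y * w y * (y - D y)) * exp (y ^ 2 / 4) := by ring
        rw [this]; positivity
    have hxp : 0 < x := hx0.trans_le hx.1
    have h3 : -(a * h x0) * exp (x0 ^ 2 / 4) ≤ (x * w x - a * h x) * exp (x ^ 2 / 4) := by
      refine le_trans ?_ hm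
      apply mul_le_mul_of_nonneg_right _ (exp_pos _).le
      have := mul_pos hx0 (wpos x0 hx0)
      linarith
    have h4 : -(a * h x0) * exp (x0 ^ 2 / 4 - x ^ 2 / 4) ≤ x * w x - a * h x := by
      rw [exp_sub, ← mul_div_assoc, div_le_iff₀ (exp_pos _)]
      exact h3
    refine le_trans ?_ h4
    have h5 : exp (x0 ^ 2 / 4 - x ^ 2 / 4) ≤ exp (-(x0 * (x - x0) / 2)) := by
      apply exp_le_exp.2
      nlinarith [sq_nonneg (x - x0)]
    have := mul_pos ha (hpos x0 hx0)
    nlinarith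
  have hx0p := hpos x0 hx0
  set k : ℝ := x0 ^ (-a - 1) * (a * h x0) with hk
  have hkp : 0 < k := by positivity
  have hmono : h x0 * x0 ^ (-a) - k * (2 / x0) * exp (-(x0 * (x0 - x0) / 2))
      ≤ h T * T ^ (-a) - k * (2 / x0) * exp (-(x0 * (T - x0) / 2)) := by
    refine kpz_mono (F := fun y => h y * y ^ (-a) - k * (2 / x0) * exp (-(x0 * (y - x0) / 2)))
      (F' := fun y => y ^ (-a - 1) * (y * w y - a * h y) -
        k * (2 / x0) * (exp (-(x0 * (y - x0) / 2)) * (-(x0 * 1 / 2)))) hT ?_ ?_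
    · intro y hy
      have hy0 : 0 < y := hx0.trans_le hy.1
      exact (kpz_G_deriv a hh hy0).sub
        ((((((hasDerivAt_id y).sub_const x0).const_mul x0).div_const 2).neg.exp).const_mul _)
    · intro y hy
      have hy0 : 0 < y := hx0.trans_le hy.1
      have e : k * (2 / x0) * (exp (-(x0 * (y - x0) / 2)) * (-(x0 * 1 / 2)))
        = - (k * exp (-(x0 * (y - x0) / 2))) := by field_simp
      rw [e]
      have h6 : y ^ (-a - 1) ≤ x0 ^ (-a - 1) :=
        Real.rpow_le_rpow_of_nonpos hx0 hy.1 (by linarith)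
      have h7 := key y hy
      have h8 : 0 < y ^ (-a - 1) := by positivity
      have h9 := mul_le_mul_of_nonneg_left h7 h8.le
      have h10 : y ^ (-a - 1) * ((a * h x0) * exp (-(x0 * (y - x0) / 2))) ≤
        x0 ^ (-a - 1) * ((a * h x0) * exp (-(x0 * (y - x0) / 2))) :=
        mul_le_mul_of_nonneg_right h6 (by positivity)
      rw [hk]
      nlinarith
  have h11 : 0 < k * (2 / x0) * exp (-(x0 * (T - x0) / 2)) := by positivity
  have h12 : h x0 * x0 ^ (-a) * (1 - 2 * a / x0 ^ 2) = h x0 * x0 ^ (-a) - k * (2 / x0) := by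
    rw [hk, Real.rpow_sub_one hx0.ne']
    field_simp
  simp only [sub_self, mul_zero, zero_div, neg_zero, exp_zero, mul_one] at hmono
  linarith

lemma kpz_L2 {h w D : ℝ → ℝ} {a : ℝ} (ha : 0 < a) (ha1 : a < 1)
    (hh : ∀ x > 0, HasDerivAt h (w x) x)
    (hw : ∀ x > 0, HasDerivAt w (a / 2 * h x - (D x - x / 2) * w x) x)
    (hpos : ∀ x > 0, 0 < h x) (wpos : ∀ x > 0, 0 < w x)
    {X ρ0 C : ℝ} (hX : 0 < X) (hρ0 : ρ0 < 1)
    (hD0 : ∀ x ≥ X, D x ≤ ρ0 * x) (hC : ∀ x ≥ X, h x * x ^ (-a) ≤ C) : False := by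
  obtain ⟨ρ, hρ1, hρa, hρh, hD⟩ : ∃ ρ : ℝ, ρ < 1 ∧ a ≤ ρ ∧ 1 / 2 ≤ ρ ∧ ∀ x ≥ X, D x ≤ ρ * x := by
    refine ⟨max ρ0 (max a (1 / 2)), ?_, ?_, ?_, ?_⟩
    · simp only [max_lt_iff]; refine ⟨hρ0, ha1, by norm_num⟩
    · exact le_trans (le_max_left _ _) (le_max_right _ _)
    · exact le_trans (le_max_right _ _) (le_max_right _ _)
    · intro x hx
      exact (hD0 x hx).trans (mul_le_mul_of_nonneg_right (le_max_left _ _) (hX.le.trans hx))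
  obtain ⟨b, hab, hb1, hbk⟩ : ∃ b : ℝ, a < b ∧ b < 1 ∧ b * ρ < a := by
    refine ⟨2 * a / (1 + ρ), ?_, ?_, ?_⟩
    · rw [lt_div_iff₀ (by linarith)]; nlinarith
    · rw [div_lt_one (by linarith)]; linarith
    · rw [div_mul_eq_mul_div, div_lt_iff₀ (by linarith)]; nlinarith
  set κ : ℝ := a / 2 - b * (ρ - 1 / 2) with hκ
  have hκp : 0 < κ := by rw [hκ]; nlinarith
  have hMd : ∀ x > 0, HasDerivAt (fun x => x * w x - b * h x)
      (1 * w x + x * (a / 2 * h x - (D x - x / 2) * w x) - b * w x) x := fun x hx =>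
    ((hasDerivAt_id x).mul (hw x hx)).sub ((hh x hx).const_mul b)
  have hMl : ∀ x ≥ X, -(ρ - 1 / 2) * x * (x * w x - b * h x) + κ * x * h x ≤
      1 * w x + x * (a / 2 * h x - (D x - x / 2) * w x) - b * w x := by
    intro x hx
    have hx0 : 0 < x := hX.trans_le hx
    have h1 : 0 ≤ x * w x * (ρ * x - D x) :=
      mul_nonneg (mul_nonneg hx0.le (wpos x hx0).le) (by linarith [hD x hx])
    have h2 : 0 ≤ (1 - b) * w x := mul_nonneg (by linarith) (wpos x hx0).le
    rw [hκ]
    nlinarith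
  have hhm : ∀ x ≥ X, h X ≤ h x := fun x hx =>
    kpz_mono hx (fun y hy => hh y (hX.trans_le hy.1)) (fun y hy => (wpos y (hX.trans_le hy.1)).le)
  have hXp := hpos X hX
  obtain ⟨x2, hx2, hM2⟩ : ∃ x2 ≥ X, 0 ≤ x2 * w x2 - b * h x2 := by
    by_contra! hcon
    set k := κ * X * h X with hk
    have hkp : 0 < k := by positivity
    set T := X + (b * h X) / k with hTd
    have hbp : 0 < b := ha.trans hab
    have hT : X ≤ T := by
      have : 0 < (b * h X) / k := by positivity
      linarith
    have := kpz_mono (F := fun x => (x * w x - b * h x) - k * x)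
      (F' := fun x => (1 * w x + x * (a / 2 * h x - (D x - x / 2) * w x) - b * w x) - k * 1) hT
      (fun y hy => (hMd y (hX.trans_le hy.1)).sub ((hasDerivAt_id y).const_mul k))
      (by
        intro y hy
        have h1 := hMl y hy.1
        have h2 := hcon y hy.1
        have hy0 : 0 < y := hX.trans_le hy.1
        have h3 : 0 ≤ (ρ - 1 / 2) * y * (-(y * w y - b * h y)) :=
          mul_nonneg (mul_nonneg (by linarith) hy0.le) (by linarith)
        have h4 : k ≤ κ * y * h y := by
          rw [hk]
          have := hhm y hy.1
          have := hy.1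
          gcongr
        linarith)
    have h5 := hcon T hT
    have h6 : k * T = k * X + b * h X := by rw [hTd]; field_simp
    have h7 := mul_pos hX (wpos X hX)
    linarith
  have hx20 : 0 < x2 := hX.trans_le hx2
  have hM : ∀ x ≥ x2, 0 ≤ x * w x - b * h x := by
    intro x hx
    have := kpz_mono (F := fun y => (y * w y - b * h y) * exp ((ρ - 1 / 2) * (y ^ 2 / 2)))
      (F' := fun y => (1 * w y + y * (a / 2 * h y - (D y - y / 2) * w y) - b * w y) * exp ((ρ - 1 / 2) * (y ^ 2 / 2))
          + (y * w y - b * h y) * (exp ((ρ - 1 / 2) * (y ^ 2 / 2)) * ((ρ - 1 / 2) * (2 * y / 2)))) hx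
      (by
        intro y hy
        have e1 : HasDerivAt (fun y : ℝ => exp ((ρ - 1 / 2) * (y ^ 2 / 2)))
            (exp ((ρ - 1 / 2) * (y ^ 2 / 2)) * ((ρ - 1 / 2) * (2 * y / 2))) y := by
          have := (((hasDerivAt_pow 2 y).div_const 2).const_mul (ρ - 1 / 2)).exp
          simpa using this
        exact (hMd y (hx20.trans_le hy.1)).mul e1)
      (by
        intro y hy
        have hy0 := hx20.trans_le hy.1
        have h1 := hMl y (le_trans hx2 hy.1)
        have h2 : 0 < κ * y * h y := by have := hpos y hy0; positivity
        have : 0 ≤ ((1 * w y + y * (a / 2 * h y - (D y - y / 2) * w y) - b * w y) + (ρ - 1 / 2) * y * (y * w y - b * h y)) * exp ((ρ - 1 / 2) * (y ^ 2 / 2)) :=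
          mul_nonneg (by linarith) (exp_pos _).le
        refine this.trans_eq ?_
        ring)
    have h2 := (mul_nonneg hM2 (exp_pos ((ρ - 1 / 2) * (x2 ^ 2 / 2))).le).trans this
    exact nonneg_of_mul_nonneg_left h2 (exp_pos _)
  have hb : ∀ x ≥ x2, h x2 * x2 ^ (-b) ≤ h x * x ^ (-b) := by
    intro x hx
    exact kpz_mono (F := fun x => h x * x ^ (-b)) (F' := fun x => x ^ (-b - 1) * (x * w x - b * h x)) hx
      (fun y hy => kpz_G_deriv b hh (hx20.trans_le hy.1))
      (fun y hy => mul_nonneg (Real.rpow_nonneg (hx20.trans_le hy.1).le _) (hM y hy.1))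
  set k2 := h x2 * x2 ^ (-b) with hk2
  have hk2p : 0 < k2 := mul_pos (hpos _ hx20) (Real.rpow_pos_of_pos hx20 _)
  have ht := (tendsto_rpow_atTop (show 0 < b - a by linarith)).eventually_gt_atTop (C / k2)
  obtain ⟨x, hx, hx'⟩ := (ht.and (eventually_ge_atTop x2)).exists
  have hx0 := hx20.trans_le hx'
  have h1 := hb x hx'
  have h2 := hC x (le_trans hx2 hx')
  rw [div_lt_iff₀ hk2p] at hx
  have h3 : x ^ (b - a) * (h x * x ^ (-b)) = h x * x ^ (-a) := by
    rw [show -a = (b - a) + (-b) by ring, Real.rpow_add hx0]; ring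
  have h4 := mul_le_mul_of_nonneg_left h1 (Real.rpow_nonneg hx0.le (b - a))
  linarith

lemma kpz_core {h w D : ℝ → ℝ} {a C : ℝ} (ha : 0 < a) (ha1 : a < 1) (hCp : 0 < C)
    (hh : ∀ x > 0, HasDerivAt h (w x) x)
    (hw : ∀ x > 0, HasDerivAt w (a / 2 * h x - (D x - x / 2) * w x) x)
    (hpos : ∀ x > 0, 0 < h x) (wpos : ∀ x > 0, 0 < w x)
    (hDG : ∀ θ, 0 < θ → θ < 1 → ∃ ρ < 1, ∀ x > 0, h x * x ^ (-a) ≤ θ * C → D x ≤ ρ * x)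
    {θ : ℝ} (hθ : 0 < θ) (hθ1 : θ < 1) :
    ∀ᶠ x in atTop, θ * C ≤ h x * x ^ (-a) := by
  obtain ⟨θ', h1, h2⟩ := exists_between hθ1
  have hθ'p : 0 < θ' := hθ.trans h1
  obtain ⟨ρ, hρ, hD⟩ := hDG θ' hθ'p h2
  have hev : ∀ᶠ x : ℝ in atTop, 2 * a / x ^ 2 < 1 - θ / θ' := by
    have : Tendsto (fun x : ℝ => 2 * a / x ^ 2) atTop (𝓝 0) :=
      tendsto_const_nhds.div_atTop (tendsto_pow_atTop two_ne_zero)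
    apply this.eventually_lt_const
    have : θ / θ' < 1 := by rwa [div_lt_one hθ'p]
    linarith
  obtain ⟨X0, hX0⟩ := eventually_atTop.1 hev
  set X := max X0 1
  have hXp : 0 < X := lt_of_lt_of_le one_pos (le_max_right _ _)
  obtain ⟨x1, hx1, hG1⟩ : ∃ x1 ≥ X, θ' * C < h x1 * x1 ^ (-a) := by
    by_contra! hcon
    exact kpz_L2 ha ha1 hh hw hpos wpos hXp hρ
      (fun x hx => hD x (hXp.trans_le hx) (hcon x hx)) hcon
  have hx1p := hXp.trans_le hx1
  filter_upwards [eventually_ge_atTop x1] with T hT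
  have hGc : ∀ x > 0, ContinuousAt (fun x => h x * x ^ (-a)) x := fun x hx =>
    (kpz_G_deriv a hh hx).continuousAt
  by_cases hTT : θ' * C ≤ h T * T ^ (-a)
  · exact le_trans (mul_le_mul_of_nonneg_right h1.le hCp.le) hTT
  push Not at hTT
  have hcomp : IsCompact (Icc x1 T ∩ (fun x => h x * x ^ (-a)) ⁻¹' Ici (θ' * C)) := by
    apply isCompact_Icc.of_isClosed_subset _ inter_subset_left
    apply ContinuousOn.preimage_isClosed_of_isClosed _ isClosed_Icc isClosed_Ici
    exact fun x hx => (hGc x (hx1p.trans_le hx.1)).continuousWithinAt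
  obtain ⟨s, ⟨hsI, hsG⟩, hsmax⟩ := hcomp.exists_isGreatest ⟨x1, ⟨le_rfl, hT⟩, hG1.le⟩
  have hs0 : 0 < s := hx1p.trans_le hsI.1
  have hsG' : θ' * C ≤ h s * s ^ (-a) := hsG
  have hsT : s < T := by
    refine lt_of_le_of_ne hsI.2 ?_
    rintro rfl
    linarith
  have hlt : ∀ x ∈ Ioc s T, h x * x ^ (-a) < θ' * C := by
    intro x hx
    by_contra! hc
    have := hsmax ⟨⟨hsI.1.trans hx.1.le, hx.2⟩, hc⟩
    linarith [hx.1]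
  have hsle : h s * s ^ (-a) ≤ θ' * C := by
    have ht : Tendsto (fun x => h x * x ^ (-a)) (𝓝[>] s) (𝓝 (h s * s ^ (-a))) :=
      (hGc s hs0).tendsto.mono_left nhdsWithin_le_nhds
    refine le_of_tendsto ht ?_
    filter_upwards [Ioc_mem_nhdsGT hsT] with x hx using (hlt x hx).le
  have hfin := kpz_L1 ha ha1 hh hw hpos wpos hs0 hsT.le (by
    intro x hx
    have hx0 := hs0.trans_le hx.1
    have : D x ≤ ρ * x := by
      apply hD x hx0
      rcases eq_or_lt_of_le hx.1 with rfl | hl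
      · exact hsle
      · exact (hlt x ⟨hl, hx.2⟩).le
    nlinarith)
  refine le_trans ?_ hfin
  have h3 := hX0 s ((le_max_left _ _).trans (hx1.trans hsI.1))
  have h4 : θ / θ' ≤ 1 - 2 * a / s ^ 2 := by linarith
  calc θ * C = θ' * C * (θ / θ') := by field_simp
    _ ≤ h s * s ^ (-a) * (1 - 2 * a / s ^ 2) := by
      have : 0 < θ / θ' := by positivity
      have : 0 < θ' * C := by positivity
      exact mul_le_mul hsG' h4 (by positivity) (by linarith)

theorem kpz_g_liminf (q lam : ℝ) (hq : 2 < q) (hlam : 0 < lam)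
    (f : ℝ → ℝ)
    (hsol : SolvesKPZProfile q lam (Set.Ici 0) f)
    (hf0 : f 0 = -1)
    (hf'0 : derivWithin f (Set.Ici 0) 0 = 0) :
    (1 / (lam * q)) ^ (1 / (q - 1)) ≤ Filter.liminf (kpzG q f) atTop := by
  obtain ⟨hC2, hode⟩ := hsol
  unfold kpzG
  set h : ℝ → ℝ := derivWithin f (Ici 0) with hhdef
  set w : ℝ → ℝ := derivWithin h (Ici 0) with hwdef
  have hC1 : ContDiffOn ℝ 1 h (Ici 0) :=
    hC2.derivWithin (uniqueDiffOn_Ici 0) (by norm_num)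
  have hwc : ContinuousOn w (Ici 0) := hC1.continuousOn_derivWithin (uniqueDiffOn_Ici 0) le_rfl
  have hfd : ∀ x > 0, HasDerivAt f (h x) x := fun x hx =>
    ((hC2.differentiableOn (by norm_num)) x hx.le).hasDerivWithinAt.hasDerivAt (Ici_mem_nhds hx)
  have hh : ∀ x > 0, HasDerivAt h (w x) x := fun x hx =>
    ((hC1.differentiableOn (by norm_num)) x hx.le).hasDerivWithinAt.hasDerivAt (Ici_mem_nhds hx)
  have hhc : ContinuousOn h (Ici 0) := hC1.continuousOn
  have hq1 : 0 < q - 1 := by linarith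
  set c : ℝ := (q - 2) / (2 * (q - 1)) with hc
  have hcp : 0 < c := by apply div_pos <;> linarith
  set a : ℝ := 1 / (q - 1) with ha
  have hap : 0 < a := by positivity
  have ha1 : a < 1 := by rw [ha, div_lt_one hq1]; linarith
  have hca : 1 / 2 - c = a / 2 := by rw [hc, ha]; field_simp; ring
  have hweq : ∀ x ∈ Ici (0 : ℝ), w x = -lam * |h x| ^ q + 1 / 2 * x * h x - c * f x := by
    intro x hx
    have := hode x hx
    linarith
  have hw0 : w 0 = c := by
    rw [hweq 0 self_mem_Ici, hf'0, hf0, abs_zero, Real.zero_rpow (by linarith)]; ring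
  have hwd : ∀ x > 0, 0 < h x → HasDerivAt w
      (a / 2 * h x - (lam * q * h x ^ (q - 1) - x / 2) * w x) x := by
    intro x hx hxp
    have e : w =ᶠ[𝓝 x] fun x => -lam * h x ^ q + 1 / 2 * x * h x - c * f x := by
      have := (hh x hx).continuousAt.eventually_const_lt hxp
      filter_upwards [this, Ioi_mem_nhds hx] with y hy hy0
      rw [hweq y (mem_Ici.2 (le_of_lt (mem_Ioi.1 hy0))), abs_of_pos hy]
    refine HasDerivAt.congr_of_eventuallyEq ?_ e
    refine (((((hh x hx).rpow_const (p := q) (Or.inl hxp.ne')).const_mul (-lam)).add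
      (((hasDerivAt_id x).const_mul (1 / 2)).mul (hh x hx))).sub ((hfd x hx).const_mul c)).congr_deriv ?_
    rw [← hca]
    simp only [id]
    ring
  have hpos_of : ∀ s > 0, (∀ x ∈ Ioo 0 s, 0 < w x) → 0 < h s := by
    intro s hs hws
    have : StrictMonoOn h (Icc 0 s) := by
      apply strictMonoOn_of_deriv_pos (convex_Icc _ _) (hhc.mono Icc_subset_Ici_self)
      intro x hx
      rw [interior_Icc] at hx
      rw [(hh x hx.1).deriv]
      exact hws x hx
    have := this (left_mem_Icc.2 hs.le) (right_mem_Icc.2 hs.le) hs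
    rwa [hf'0] at this
  have wpos0 : ∀ X ≥ 0, 0 < w X := by
    intro X hX
    by_contra! hcon
    have hcomp : IsCompact (Icc 0 X ∩ w ⁻¹' Iic 0) := by
      apply isCompact_Icc.of_isClosed_subset _ inter_subset_left
      exact (hwc.mono Icc_subset_Ici_self).preimage_isClosed_of_isClosed isClosed_Icc isClosed_Iic
    obtain ⟨s, ⟨hsI, hsw⟩, hsmin⟩ := hcomp.exists_isLeast ⟨X, ⟨hX, le_rfl⟩, hcon⟩
    have hsw' : w s ≤ 0 := hsw
    have hs0 : 0 < s := by
      refine lt_of_le_of_ne hsI.1 ?_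
      rintro rfl
      linarith
    have hlt : ∀ x ∈ Ico 0 s, 0 < w x := by
      intro x hx
      by_contra! hc
      have := hsmin ⟨⟨hx.1, hx.2.le.trans hsI.2⟩, hc⟩
      linarith [hx.2]
    have hsp := hpos_of s hs0 (fun x hx => hlt x ⟨hx.1.le, hx.2⟩)
    have hcs : ContinuousAt w s := hwc.continuousAt (Ici_mem_nhds hs0)
    have hws : w s = 0 := by
      refine le_antisymm hsw' ?_
      refine ge_of_tendsto (hcs.tendsto.mono_left (nhdsWithin_le_nhds (s := Iio s))) ?_
      filter_upwards [Ico_mem_nhdsLT hs0] with x hx using (hlt x hx).le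
    have hd := hwd s hs0 hsp
    rw [hws, mul_zero, sub_zero] at hd
    have ht := hd.tendsto_slope
    have ht2 : Tendsto (slope w s) (𝓝[<] s) (𝓝 (a / 2 * h s)) :=
      ht.mono_left (nhdsWithin_mono _ (fun x hx => ne_of_lt hx))
    have hle : a / 2 * h s ≤ 0 := by
      refine le_of_tendsto ht2 ?_
      filter_upwards [Ico_mem_nhdsLT hs0] with x hx
      rw [slope_def_field, hws, sub_zero]
      exact div_nonpos_of_nonneg_of_nonpos (hlt x hx).le (by linarith [hx.2])
    have : 0 < a / 2 * h s := by positivity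
    linarith
  have wpos : ∀ x > 0, 0 < w x := fun x hx => wpos0 x (le_of_lt hx)
  have hpos : ∀ x > 0, 0 < h x := fun x hx => hpos_of x hx (fun y hy => wpos y hy.1)
  have hw : ∀ x > 0, HasDerivAt w (a / 2 * h x - (lam * q * h x ^ (q - 1) - x / 2) * w x) x :=
    fun x hx => hwd x hx (hpos x hx)
  set C : ℝ := (1 / (lam * q)) ^ a with hCdef
  have hqp : 0 < q := by linarith
  have hCp : 0 < C := by positivity
  have haq : a * (q - 1) = 1 := by rw [ha]; field_simp
  have hGpow : ∀ x > 0, (h x * x ^ (-a)) ^ (q - 1) = h x ^ (q - 1) / x := by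
    intro x hx
    rw [Real.mul_rpow (hpos x hx).le (Real.rpow_nonneg hx.le _), ← Real.rpow_mul hx.le, neg_mul, haq,
      Real.rpow_neg_one, div_eq_mul_inv]
  have hCpow : C ^ (q - 1) = 1 / (lam * q) := by
    rw [hCdef, ← Real.rpow_mul (by positivity), haq, Real.rpow_one]
  have hlow : ∀ θ : ℝ, 0 < θ → θ < 1 → ∀ᶠ x in atTop, θ * C ≤ h x * x ^ (-a) := by
    intro θ hθ hθ1
    refine kpz_core hap ha1 hCp hh hw hpos wpos ?_ hθ hθ1
    intro θ hθ hθ1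
    refine ⟨θ ^ (q - 1), Real.rpow_lt_one hθ.le hθ1 hq1, ?_⟩
    intro x hx hG
    have h0 : 0 ≤ h x * x ^ (-a) := mul_nonneg (hpos x hx).le (Real.rpow_nonneg hx.le _)
    have h1 := Real.rpow_le_rpow h0 hG hq1.le
    rw [hGpow x hx, Real.mul_rpow hθ.le hCp.le, hCpow, div_le_iff₀ hx] at h1
    have h2 := mul_le_mul_of_nonneg_left h1 (show 0 ≤ lam * q by positivity)
    refine h2.trans_eq ?_
    field_simp
  have hup : ∀ᶠ x in atTop, h x * x ^ (-a) ≤ (1 / (2 * lam)) ^ a := by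
    have h1p := hpos 1 one_pos
    have hhm : ∀ x ≥ 1, h 1 ≤ h x := fun x hx =>
      kpz_mono hx (fun y hy => hh y (one_pos.trans_le hy.1))
        (fun y hy => (wpos y (one_pos.trans_le hy.1)).le)
    filter_upwards [eventually_ge_atTop (1 : ℝ), eventually_ge_atTop (1 + -f 1 / h 1)] with x hx hx2
    have hx0 : 0 < x := one_pos.trans_le hx
    have hf : 0 ≤ f x := by
      have := kpz_mono (F := fun y => f y - h 1 * y) (F' := fun y => h y - h 1 * 1) hx
        (fun y hy => (hfd y (one_pos.trans_le hy.1)).sub ((hasDerivAt_id y).const_mul (h 1)))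
        (fun y hy => by have := hhm y hy.1; linarith)
      have h3 : -f 1 / h 1 ≤ x - 1 := by linarith
      rw [div_le_iff₀ h1p] at h3
      linarith
    have hxp := hpos x hx0
    have h1 := hweq x hx0.le
    have h2 := wpos x hx0
    rw [abs_of_pos hxp] at h1
    have h3 : lam * h x ^ q ≤ 1 / 2 * x * h x := by
      have := mul_nonneg hcp.le hf
      linarith
    have h4 : h x ^ q = h x ^ (q - 1) * h x := by
      rw [Real.rpow_sub_one hxp.ne']; field_simp
    rw [h4, ← mul_assoc] at h3
    have h5 := le_of_mul_le_mul_right h3 hxp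
    have h6 : (h x * x ^ (-a)) ^ (q - 1) ≤ 1 / (2 * lam) := by
      rw [hGpow x hx0, div_le_div_iff₀ hx0 (by positivity)]
      linarith
    have h0 : 0 ≤ h x * x ^ (-a) := mul_nonneg (hpos x hx0).le (Real.rpow_nonneg hx0.le _)
    have h7 := Real.rpow_le_rpow (Real.rpow_nonneg h0 _) h6 hap.le
    rwa [← Real.rpow_mul h0, mul_comm (q - 1) a, haq, Real.rpow_one] at h7
  have hg : ∀ t : ℝ, exp (-t / (q - 1)) * h (exp t) = h (exp t) * (exp t) ^ (-a) := by
    intro t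
    rw [← Real.exp_mul, mul_comm, ha]
    congr 2
    ring
  simp only [hg]
  have hbdd : IsCoboundedUnder (· ≥ ·) atTop (fun t : ℝ => h (exp t) * (exp t) ^ (-a)) := by
    apply IsBoundedUnder.isCoboundedUnder_ge
    exact ⟨_, eventually_map.2 (tendsto_exp_atTop.eventually hup)⟩
  refine le_of_forall_lt fun y hy => ?_
  obtain ⟨z, hz1, hz2⟩ := exists_between (show max y 0 < C from max_lt hy hCp)
  have hz0 : 0 < z := (le_max_right _ _).trans_lt hz1
  refine lt_of_lt_of_le ((le_max_left _ _).trans_lt hz1) ?_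
  refine le_liminf_of_le hbdd ?_
  have := tendsto_exp_atTop.eventually (hlow (z / C) (by positivity) ((div_lt_one hCp).2 hz2))
  rwa [div_mul_cancel₀ _ hCp.ne'] at this
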